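/- For every integer d ≥ 4, the enumerative invariants of Section 5 satisfy the degeneration relation N₂(d) = 4·e(d, 2d−5) + (6d−16)·b(d−1, 2d−5) + 38·a(d, 2d−5) + (11 + 9·(6d−15))·a(d−1, 2d−5) + N₃(d). -/

import Mathlib

/-- The factorial of an integer `n`, interpreted as `0! = 1` extended by `n! = (n.toNat)!`
(only ever applied to nonnegative integers). -/
noncomputable def zfact (n : ℤ) : ℚ := (Nat.factorial n.toNat : ℚ)

/-- `1/n!` for an integer `n`, with the convention `1/n! = 0` whenever `n < 0`. -/
noncomputable def invfact (n : ℤ) : ℚ :=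
  if 0 ≤ n then (Nat.factorial n.toNat : ℚ)⁻¹ else 0

/-- The binomial coefficient `binom(n, k)` for integers, equal to `0` when `k > n` or `k < 0`. -/
noncomputable def zbinom (n k : ℤ) : ℚ :=
  if 0 ≤ k ∧ k ≤ n then (Nat.choose n.toNat k.toNat : ℚ) else 0

/-- `a(d, g) = (2d−g−1)·g!/(d!·(g−d+1)!)` from Proposition 2.1. -/
noncomputable def aCount (d g : ℤ) : ℚ :=
  ((2 * d - g - 1 : ℤ) : ℚ) * zfact g * invfact d * invfact (g - d + 1)

/-- `b(d, g) = (2d−g−1)·(2d−g)·(2d−g+1)·g!/(d!·(g−d)!)` from Proposition 2.1. -/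
noncomputable def bCount (d g : ℤ) : ℚ :=
  ((2 * d - g - 1 : ℤ) : ℚ) * ((2 * d - g : ℤ) : ℚ) * ((2 * d - g + 1 : ℤ) : ℚ) *
    zfact g * invfact d * invfact (g - d)

/-- `c(d, g, γ) = (γ²·(2d−g) − γ)·binom(g, d)` from Proposition 2.1. -/
noncomputable def cCount (d g γ : ℤ) : ℚ :=
  (((γ : ℚ) ^ 2 * ((2 * d - g : ℤ) : ℚ) - (γ : ℚ))) * zbinom g d

/-- `e(d, g) = 8·g!/((d−3)!·(g−d+2)!) − 8·g!/(d!·(g−d−1)!)` from Proposition 2.1. -/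
noncomputable def eCount (d g : ℤ) : ℚ :=
  8 * zfact g * invfact (d - 3) * invfact (g - d + 2) -
    8 * zfact g * invfact d * invfact (g - d - 1)

/-- `N(d)`, the number of pencils of degree `d` with two unspecified triple ramification
points on a general curve of genus `2d−4` (Proposition 2.2 (2)). -/
noncomputable def Ncount (d : ℤ) : ℚ :=
  48 * (6 * (d : ℚ) ^ 2 - 28 * (d : ℚ) + 35) * zfact (2 * d - 4) * invfact d * invfact (d - 3)

/-- `N₁(d)` from Proposition 2.2 (3). -/
noncomputable def N1count (d : ℤ) : ℚ :=
  24 * (12 * (d : ℚ) ^ 3 - 92 * (d : ℚ) ^ 2 + 240 * (d : ℚ) - 215) *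
    zfact (2 * d - 4) * invfact d * invfact (d - 2)

/-- `N₂(d)` from Theorem 5.4. -/
noncomputable def N2count (d : ℤ) : ℚ :=
  6 * (40 * (d : ℚ) ^ 2 - 179 * (d : ℚ) + 212) * zfact (2 * d - 4) * invfact d * invfact (d - 3)

/-- `N₃(d)` from Theorem 5.6. -/
noncomputable def N3count (d : ℤ) : ℚ :=
  84 * ((d : ℚ) - 3) * (2 * (d : ℚ) ^ 2 - 10 * (d : ℚ) + 13) *
    zfact (2 * d - 4) * invfact d * invfact (d - 2)

/-- The overall constant `K(d) = 2·(2d−6)!/(d!·(d−3)!)` of Theorem 1. -/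
noncomputable def Kconst (d : ℤ) : ℚ := 2 * zfact (2 * d - 6) * invfact d * invfact (d - 3)

/-- The `λ`-coefficient `A(d) = K(d)·24·(36d⁴−36d³−640d²+1885d−1475)` of Theorem 1. -/
noncomputable def Acoeff (d : ℤ) : ℚ :=
  Kconst d * (24 * (36 * (d : ℚ) ^ 4 - 36 * (d : ℚ) ^ 3 - 640 * (d : ℚ) ^ 2 +
    1885 * (d : ℚ) - 1475))

/-- The `δ₀`-coefficient `B₀(d) = K(d)·(144d⁴−528d³−298d²+3049d−2940)` of Theorem 1. -/
noncomputable def B0coeff (d : ℤ) : ℚ :=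
  Kconst d * (144 * (d : ℚ) ^ 4 - 528 * (d : ℚ) ^ 3 - 298 * (d : ℚ) ^ 2 +
    3049 * (d : ℚ) - 2940)

/-- The `δᵢ`-coefficient `Bᵢ(d) = K(d)·12·i·(2d−3−i)·(36d³−156d²+180d−5)`, `i ≥ 1`,
of Theorem 1. -/
noncomputable def Bcoeff (d i : ℤ) : ℚ :=
  Kconst d * (12 * (i : ℚ) * (2 * (d : ℚ) - 3 - (i : ℚ)) *
    (36 * (d : ℚ) ^ 3 - 156 * (d : ℚ) ^ 2 + 180 * (d : ℚ) - 5))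

/-!
By the factorial recursions, every term of the relation is a polynomial in `d` times
`(2d−5)! / (d!·(d−3)!)`. The recursion `1/(n−1)! = n · (1/n!)` holds for every integer `n`,
including those where `1/n! = 0` by convention, so small `d` need no separate treatment.
Comparing the coefficients of this common factor leaves an identity of polynomials in `d`.
-/

theorem zfact_eq_mul_zfact_sub_one {n : ℤ} (hn : 0 < n) : zfact n = n * zfact (n - 1) := by
  lift n to ℕ using hn.le
  have toNat_sub_one : ((n : ℤ) - 1).toNat = n - 1 := by omega
  rw [zfact, zfact, toNat_sub_one, Int.toNat_natCast,
    ← Nat.mul_factorial_pred (by omega : n ≠ 0)]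
  push_cast
  rfl

theorem invfact_of_neg {n : ℤ} (hn : n < 0) : invfact n = 0 :=
  if_neg hn.not_ge

theorem invfact_of_nonneg {n : ℤ} (hn : 0 ≤ n) : invfact n = (zfact n)⁻¹ :=
  if_pos hn

theorem invfact_sub_one (n : ℤ) : invfact (n - 1) = n * invfact n := by
  rcases lt_trichotomy n 0 with hneg | rfl | hpos
  · rw [invfact_of_neg hneg, invfact_of_neg (by omega), mul_zero]
  · rw [invfact_of_neg (by omega), Int.cast_zero, zero_mul]
  · have n_ne_zero : (n : ℚ) ≠ 0 := by exact_mod_cast hpos.ne'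
    rw [invfact_of_nonneg hpos.le, invfact_of_nonneg (by omega), zfact_eq_mul_zfact_sub_one hpos,
      mul_inv, mul_inv_cancel_left₀ n_ne_zero]

theorem invfact_sub_three (n : ℤ) :
    invfact (n - 3) = n * (n - 1) * (n - 2) * invfact n := by
  rw [show n - 3 = n - 1 - 1 - 1 by ring, invfact_sub_one, invfact_sub_one, invfact_sub_one]
  push_cast
  ring

/-- The quotient `g! / (d!·(g−d+2)!)`, of which `a(d, g)`, `a(d−1, g)`, `b(d−1, g)` and `e(d, g)`
are polynomial multiples. The reciprocal factorials are `invfact`, so the value is `0` when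
`d < 0` or `g < d - 2`. -/
noncomputable def factorialQuotient (d g : ℤ) : ℚ :=
  zfact g * invfact d * invfact (g - d + 2)

theorem aCount_eq_mul_factorialQuotient (d g : ℤ) :
    aCount d g = (2 * d - g - 1) * (g - d + 2) * factorialQuotient d g := by
  rw [aCount, factorialQuotient, show g - d + 1 = g - d + 2 - 1 by ring,
    invfact_sub_one (g - d + 2)]
  push_cast
  ring

theorem aCount_sub_one_eq_mul_factorialQuotient (d g : ℤ) :
    aCount (d - 1) g = (2 * d - g - 3) * d * factorialQuotient d g := by
  rw [aCount, factorialQuotient, show g - (d - 1) + 1 = g - d + 2 by ring, invfact_sub_one d]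
  push_cast
  ring

theorem bCount_sub_one_eq_mul_factorialQuotient (d g : ℤ) :
    bCount (d - 1) g =
      (2 * d - g - 3) * (2 * d - g - 2) * (2 * d - g - 1) * d * (g - d + 2) *
        factorialQuotient d g := by
  rw [bCount, factorialQuotient, show g - (d - 1) = g - d + 2 - 1 by ring, invfact_sub_one d,
    invfact_sub_one (g - d + 2)]
  push_cast
  ring

theorem eCount_eq_mul_factorialQuotient (d g : ℤ) :
    eCount d g =
      8 * (d * (d - 1) * (d - 2) - (g - d + 2) * (g - d + 1) * (g - d)) *
        factorialQuotient d g := by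
  rw [eCount, factorialQuotient, show g - d - 1 = g - d + 2 - 3 by ring, invfact_sub_three d,
    invfact_sub_three (g - d + 2)]
  push_cast
  ring

theorem zfact_two_mul_sub_four {d : ℤ} (hd : 3 ≤ d) :
    zfact (2 * d - 4) = 2 * (d - 2) * zfact (2 * d - 5) := by
  rw [zfact_eq_mul_zfact_sub_one (by omega), show 2 * d - 4 - 1 = 2 * d - 5 by ring]
  push_cast
  ring

theorem factorialQuotient_two_mul_sub_five (d : ℤ) :
    factorialQuotient d (2 * d - 5) = zfact (2 * d - 5) * invfact d * invfact (d - 3) := by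
  rw [factorialQuotient, show 2 * d - 5 - d + 2 = d - 3 by ring]

theorem N2count_eq_mul_factorialQuotient {d : ℤ} (hd : 3 ≤ d) :
    N2count d =
      12 * (d - 2) * (40 * d ^ 2 - 179 * d + 212) * factorialQuotient d (2 * d - 5) := by
  rw [N2count, zfact_two_mul_sub_four hd, factorialQuotient_two_mul_sub_five]
  ring

theorem N3count_eq_mul_factorialQuotient {d : ℤ} (hd : 3 ≤ d) :
    N3count d =
      168 * (d - 3) * (2 * d ^ 2 - 10 * d + 13) * factorialQuotient d (2 * d - 5) := by
  have invfact_sub_three_eq : invfact (d - 3) = (d - 2) * invfact (d - 2) := by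
    rw [show d - 3 = d - 2 - 1 by ring, invfact_sub_one]
    push_cast
    rfl
  rw [N3count, zfact_two_mul_sub_four hd, factorialQuotient_two_mul_sub_five,
    invfact_sub_three_eq]
  ring

/-- the degeneration relation for `N₂(d)` of Section 5, for every integer `d ≥ 4`:
`N₂(d) = 4·e(d, 2d−5) + (6d−16)·b(d−1, 2d−5) + 38·a(d, 2d−5) + (11 + 9·(6d−15))·a(d−1, 2d−5)
 + N₃(d)`. -/
theorem N2_degeneration_relation (d : ℤ) (hd : 4 ≤ d) :
    N2count d = 4 * eCount d (2 * d - 5) + (6 * (d : ℚ) - 16) * bCount (d - 1) (2 * d - 5) +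
      38 * aCount d (2 * d - 5) + (11 + 9 * (6 * (d : ℚ) - 15)) * aCount (d - 1) (2 * d - 5) +
      N3count d := by
  have three_le : 3 ≤ d := by omega
  rw [N2count_eq_mul_factorialQuotient three_le, N3count_eq_mul_factorialQuotient three_le,
    eCount_eq_mul_factorialQuotient, bCount_sub_one_eq_mul_factorialQuotient,
    aCount_eq_mul_factorialQuotient, aCount_sub_one_eq_mul_factorialQuotient]
  push_cast
  ring
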